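/- arXiv:1309.5618 — 2 statements merged into one kernel-verified Lean document; each statement's English description precedes it below -/
import Mathlib

section
/- Let T be a string of length n and 1 ≤ i < j ≤ n. Let p be the starting position of the minimal suffix in Suf[i, j], and for each ℓ = 1, …, α(i, j) let p_ℓ be the starting position of the minimal suffix in Suf[j − Len(ℓ, j) + 1, j]. Then the minimal suffix of T[i..j] equals T[q..j] for some q ∈ {p, p_1, …, p_{α(i,j)}}. -/
/-!
Let `s = T[q..j]` be the minimal suffix of `T[i..j]`, and let `p` be the start of the minimal
suffix in `Suf[a, j]` for a window `[a, j]` with `i ≤ a ≤ q`. Since `s ≤ T[p..j]`, while appending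
`T[j+1..]` to both sides reverses the comparison, no mismatch can occur between them and `s` is a
prefix of `T[p..j]`. It is also a suffix of `T[p..j]`, and a minimal suffix has no border, so if
the window is shorter than `2|s|`, the two occurrences have no room to be distinct and
`s = T[p..j]`.

The window lengths `Len(ℓ, j)` start at `1` and at most double at each step, including the last
step from `Len(α(i, j), j)` to `j - i + 1`. Hence the shortest window that contains `s` is always
shorter than `2|s|`.
-/

variable {α : Type*} [LinearOrder α]

/-- `substr T i j` is the 1-indexed substring `T[i..j]` (inclusive). -/
def substr (T : List α) (i j : ℕ) : List α := (T.drop (i - 1)).take (j - i + 1)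

/-- `sufFrom T i` is the 1-indexed suffix `T[i..]`. -/
def sufFrom (T : List α) (i : ℕ) : List α := T.drop (i - 1)

/-- `s` is the lexicographically minimal nonempty suffix of `w`. -/
def IsMinSuffix (w s : List α) : Prop :=
  s ≠ [] ∧ s <:+ w ∧ ∀ t, t ≠ [] → t <:+ w → ¬ List.Lex (· < ·) t s

/-- `Len ℓ j`: for `ℓ = 1` it is `1`; for `ℓ ≥ 2`, with `m = ⌊ℓ/2⌋ - 1`, it is
`2·2^m + (j mod 2^m)` if `ℓ` is even and `3·2^m + (j mod 2^m)` if `ℓ` is odd. -/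
def Len (ℓ j : ℕ) : ℕ :=
  if ℓ = 1 then 1
  else if ℓ % 2 = 0 then 2 * 2 ^ (ℓ / 2 - 1) + j % 2 ^ (ℓ / 2 - 1)
  else 3 * 2 ^ (ℓ / 2 - 1) + j % 2 ^ (ℓ / 2 - 1)

/-- A string is unbordered if no string other than `[]` and itself is both a prefix and a suffix
of it. Distinct occurrences of an unbordered string never overlap. -/
def Unbordered {β : Type*} (s : List β) : Prop :=
  ∀ t, t <+: s → t <:+ s → t = [] ∨ t = s

/-- `p` is the starting position of the minimal suffix in `Suf[a, j]`, the data available for each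
window `[a, j]`. Positions are 1-indexed, and the suffixes compared extend to the end of `T`. -/
def IsMinStart (T : List α) (a j p : ℕ) : Prop :=
  a ≤ p ∧ p ≤ j ∧ ∀ q, a ≤ q → q ≤ j → ¬ List.Lex (· < ·) (sufFrom T q) (sufFrom T p)

section Occurrences

variable {β : Type*} {T s u : List β} {i j k q : ℕ}

theorem Unbordered.eq_or_two_mul_length_le (hs : Unbordered s) (hpre : s <+: u) (hsuf : s <:+ u) :
    s = u ∨ 2 * s.length ≤ u.length := by
  by_contra! ⟨hne, hlt⟩
  have hlen : s.length < u.length := hpre.length_le.lt_of_ne (mt hpre.eq_of_length hne)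
  set d := u.length - s.length
  -- The two occurrences of `s` in `u` overlap in `s.drop d`, a border of `s`.
  have hborder : s.drop d <+: s := by
    have := hpre.drop d
    rwa [← List.suffix_iff_eq_drop.1 hsuf] at this
  have hborder_len : (s.drop d).length = s.length - d := List.length_drop
  rcases hs _ hborder (List.drop_suffix d s) with h | h
  · rw [h, List.length_nil] at hborder_len
    omega
  · rw [h] at hborder_len
    omega

theorem drop_substr (hi : 1 ≤ i) (hk : i + k ≤ j) :
    (substr T i j).drop k = substr T (i + k) j := by
  rw [substr, substr, List.drop_take, List.drop_drop]
  congr 2 <;> omega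

theorem substr_suffix_substr (hi : 1 ≤ i) (hiq : i ≤ q) (hqj : q ≤ j) :
    substr T q j <:+ substr T i j := by
  obtain ⟨k, rfl⟩ := Nat.exists_eq_add_of_le hiq
  exact drop_substr (T := T) hi hqj ▸ List.drop_suffix _ _

theorem length_substr (hq : 1 ≤ q) (hqj : q ≤ j) (hj : j ≤ T.length) :
    (substr T q j).length = j - q + 1 := by
  rw [substr, List.length_take, List.length_drop]
  omega

theorem substr_append_drop (hq : 1 ≤ q) (hqj : q ≤ j) :
    substr T q j ++ T.drop j = sufFrom T q := by
  have hj : T.drop j = (T.drop (q - 1)).drop (j - q + 1) := by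
    rw [List.drop_drop]
    congr 1
    omega
  rw [hj, substr, sufFrom, List.take_append_drop]

theorem eq_substr_of_suffix (hi : 1 ≤ i) (hij : i ≤ j) (hj : j ≤ T.length)
    (hs : s <:+ substr T i j) (hs0 : s ≠ []) :
    s = substr T (j + 1 - s.length) j := by
  have hpos := List.length_pos_iff.2 hs0
  have hle := hs.length_le
  rw [length_substr hi hij hj] at hle
  rw [List.suffix_iff_eq_drop, length_substr hi hij hj, drop_substr hi (by omega)] at hs
  convert hs using 2
  omega

end Occurrences

section Minimality

theorem prefix_of_le_of_append_le_append {s u y z : List α} (h : s ≤ u) (h' : u ++ y ≤ s ++ z) :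
    s <+: u := by
  induction s generalizing u with
  | nil => exact List.nil_prefix
  | cons a s ih =>
    cases u with
    | nil => exact absurd h (not_le.2 (List.nil_lt_cons a s))
    | cons b u =>
      simp only [List.cons_append, ← not_lt, List.cons_lt_cons_iff, not_or, not_and] at h h'
      obtain rfl : a = b := le_antisymm (not_lt.1 h.1) (not_lt.1 h'.1)
      exact List.cons_prefix_cons.2 ⟨rfl, ih (not_lt.1 (h.2 rfl)) (not_lt.1 (h'.2 rfl))⟩

theorem IsMinSuffix.le {w s t : List α} (hs : IsMinSuffix w s) (ht : t ≠ []) (htw : t <:+ w) :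
    s ≤ t :=
  not_lt.1 (hs.2.2 t ht htw)

theorem IsMinSuffix.unbordered {w s : List α} (hs : IsMinSuffix w s) : Unbordered s :=
  fun _ hpre hsuf => or_iff_not_imp_left.2 fun ht =>
    le_antisymm (not_lt.1 hpre.le) (hs.le ht (hsuf.trans hs.2.1))

variable {T s : List α} {i a j p : ℕ}

theorem IsMinSuffix.prefix_substr (hs : IsMinSuffix (substr T i j) s) (hi : 1 ≤ i) (hia : i ≤ a)
    (hj : j ≤ T.length) (hp : IsMinStart T a j p) (hfit : s.length ≤ j - a + 1) :
    s <+: substr T p j := by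
  obtain ⟨hap, hpj, hmin⟩ := hp
  have hpos := List.length_pos_iff.2 hs.1
  have hs_eq := eq_substr_of_suffix hi (by omega) hj hs.2.1 hs.1
  set q := j + 1 - s.length
  have hp_ne : substr T p j ≠ [] := by
    rw [← List.length_pos_iff, length_substr (by omega) hpj hj]
    omega
  have hext : substr T p j ++ T.drop j ≤ s ++ T.drop j := by
    rw [hs_eq, substr_append_drop (by omega) hpj, substr_append_drop (by omega) (by omega)]
    exact not_lt.1 (hmin q (by omega) (by omega))
  exact prefix_of_le_of_append_le_append
    (hs.le hp_ne (substr_suffix_substr hi (hia.trans hap) hpj)) hext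

theorem IsMinSuffix.eq_substr (hs : IsMinSuffix (substr T i j) s) (hi : 1 ≤ i) (hia : i ≤ a)
    (hj : j ≤ T.length) (hp : IsMinStart T a j p) (hfit : s.length ≤ j - a + 1)
    (hlt : j - a + 1 < 2 * s.length) : s = substr T p j := by
  have hpre := hs.prefix_substr hi hia hj hp hfit
  obtain ⟨hap, hpj, -⟩ := hp
  have hsuf : s <:+ substr T p j :=
    List.suffix_of_suffix_length_le hs.2.1 (substr_suffix_substr hi (hia.trans hap) hpj)
      hpre.length_le
  refine (hs.unbordered.eq_or_two_mul_length_le hpre hsuf).resolve_right ?_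
  rw [length_substr (by omega) hpj hj]
  omega

end Minimality

section Lengths

theorem exists_le_and_lt_two_mul {L : ℕ → ℕ} (hL_one : L 1 ≤ 1)
    (hL_succ : ∀ ℓ, 1 ≤ ℓ → L (ℓ + 1) ≤ 2 * L ℓ) {n A : ℕ} (hn : 1 ≤ n) (hA : 1 ≤ A)
    (hnA : n ≤ L A) : ∃ ℓ, 1 ≤ ℓ ∧ ℓ ≤ A ∧ n ≤ L ℓ ∧ L ℓ < 2 * n := by
  induction A, hA using Nat.le_induction with
  | base => exact ⟨1, le_rfl, le_rfl, hnA, by omega⟩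
  | succ k hk ih =>
    rcases le_or_gt n (L k) with hnk | hkn
    · obtain ⟨ℓ, hℓ, hℓk, hnℓ⟩ := ih hnk
      exact ⟨ℓ, hℓ, hℓk.trans k.le_succ, hnℓ⟩
    · have := hL_succ k hk
      exact ⟨k + 1, by omega, le_rfl, hnA, by omega⟩

theorem Len_one (j : ℕ) : Len 1 j = 1 := rfl

theorem Len_two_mul_add_two (m j : ℕ) : Len (2 * m + 2) j = 2 * 2 ^ m + j % 2 ^ m := by
  have hm : (2 * m + 2) / 2 - 1 = m := by omega
  rw [Len, if_neg (by omega), if_pos (by omega), hm]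

theorem Len_two_mul_add_three (m j : ℕ) : Len (2 * m + 3) j = 3 * 2 ^ m + j % 2 ^ m := by
  have hm : (2 * m + 3) / 2 - 1 = m := by omega
  rw [Len, if_neg (by omega), if_neg (by omega), hm]

theorem Len_two (j : ℕ) : Len 2 j = 2 := by
  rw [Len_two_mul_add_two 0, pow_zero, Nat.mod_one, mul_one]

theorem Len_two_mul_add_four (m j : ℕ) :
    Len (2 * m + 4) j = 4 * 2 ^ m + j % (2 * 2 ^ m) := by
  rw [show 2 * m + 4 = 2 * (m + 1) + 2 by ring, Len_two_mul_add_two, pow_succ']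
  ring

theorem eq_one_or_exists_eq_two_mul_add {ℓ : ℕ} (hℓ : 1 ≤ ℓ) :
    ℓ = 1 ∨ ∃ m, ℓ = 2 * m + 2 ∨ ℓ = 2 * m + 3 :=
  or_iff_not_imp_left.2 fun _ => ⟨ℓ / 2 - 1, by omega⟩

theorem Len_le_Len_succ {ℓ : ℕ} (hℓ : 1 ≤ ℓ) (j : ℕ) : Len ℓ j ≤ Len (ℓ + 1) j := by
  obtain rfl | ⟨m, rfl | rfl⟩ := eq_one_or_exists_eq_two_mul_add hℓ
  · rw [Len_one, Len_two]
    exact one_le_two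
  · rw [Len_two_mul_add_two, Len_two_mul_add_three]
    omega
  · have := Nat.mod_lt j (Nat.two_pow_pos m)
    rw [Len_two_mul_add_three, Len_two_mul_add_four]
    omega

theorem Len_succ_le_two_mul {ℓ : ℕ} (hℓ : 1 ≤ ℓ) (j : ℕ) : Len (ℓ + 1) j ≤ 2 * Len ℓ j := by
  obtain rfl | ⟨m, rfl | rfl⟩ := eq_one_or_exists_eq_two_mul_add hℓ
  · rw [Len_one, Len_two]
  · rw [Len_two_mul_add_two, Len_two_mul_add_three]
    omega
  · have := Nat.mod_lt j (Nat.mul_pos two_pos (Nat.two_pow_pos m))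
    rw [Len_two_mul_add_three, Len_two_mul_add_four]
    omega

theorem monotoneOn_Len (j : ℕ) : MonotoneOn (Len · j) (Set.Ici 1) :=
  monotoneOn_nat_Ici_of_le_succ fun _ hℓ => Len_le_Len_succ hℓ j

end Lengths

theorem stmt_4_general {L : ℕ → ℕ} (hL_mono : MonotoneOn L (Set.Ici 1)) (hL_one : L 1 = 1)
    (hL_succ : ∀ ℓ, 1 ≤ ℓ → L (ℓ + 1) ≤ 2 * L ℓ) {T : List α} {i j p A : ℕ} {ps : ℕ → ℕ}
    (hi : 1 ≤ i) (hj : j ≤ T.length) (hp : IsMinStart T i j p) (hA : 1 ≤ A)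
    (hLA : L A ≤ j - i + 1) (hLA_succ : j - i + 1 ≤ L (A + 1))
    (hps : ∀ ℓ, 1 ≤ ℓ → ℓ ≤ A → IsMinStart T (j - L ℓ + 1) j (ps ℓ))
    {s : List α} (hs : IsMinSuffix (substr T i j) s) :
    ∃ q, (q = p ∨ ∃ ℓ, 1 ≤ ℓ ∧ ℓ ≤ A ∧ q = ps ℓ) ∧ s = substr T q j := by
  have hij : i ≤ j := hp.1.trans hp.2.1
  have hpos : 1 ≤ s.length := List.length_pos_iff.2 hs.1
  rcases le_or_gt s.length (L A) with hsA | hAs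
  · obtain ⟨ℓ, hℓ, hℓA, hfit, hlt⟩ := exists_le_and_lt_two_mul hL_one.le hL_succ hpos hA hsA
    have hℓ_le : L ℓ ≤ L A := hL_mono hℓ hA hℓA
    exact ⟨ps ℓ, Or.inr ⟨ℓ, hℓ, hℓA, rfl⟩,
      hs.eq_substr hi (by omega) hj (hps ℓ hℓ hℓA) (by omega) (by omega)⟩
  · have hs_le := hs.2.1.length_le
    rw [length_substr hi hij hj] at hs_le
    have hA_two := hL_succ A hA
    exact ⟨p, Or.inl rfl, hs.eq_substr hi le_rfl hj hp hs_le (by omega)⟩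

/-- Let `T` be a string of length `n`, `1 ≤ i < j ≤ n`, let `p` be the starting position of the
minimal suffix in `Suf[i,j]`, `A = α(i,j)` the largest `ℓ ≥ 1` with `Len(ℓ,j) < j - i + 1`,
and for `1 ≤ ℓ ≤ A` let `ps ℓ` be the starting position of the minimal suffix in
`Suf[j - Len(ℓ,j) + 1, j]`.  Then the minimal suffix of `T[i..j]` equals `T[q..j]` for some
`q ∈ {p, ps 1, …, ps A}`. -/
theorem stmt_4 (T : List α) (i j p A : ℕ) (ps : ℕ → ℕ)
    (hi : 1 ≤ i) (hij : i < j) (hj : j ≤ T.length)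
    (hp1 : i ≤ p) (hp2 : p ≤ j)
    (hpmin : ∀ q, i ≤ q → q ≤ j → ¬ List.Lex (· < ·) (sufFrom T q) (sufFrom T p))
    (hA1 : 1 ≤ A) (hA2 : Len A j < j - i + 1)
    (hA3 : ∀ ℓ, 1 ≤ ℓ → Len ℓ j < j - i + 1 → ℓ ≤ A)
    (hps : ∀ ℓ, 1 ≤ ℓ → ℓ ≤ A →
      j - Len ℓ j + 1 ≤ ps ℓ ∧ ps ℓ ≤ j ∧
        ∀ q, j - Len ℓ j + 1 ≤ q → q ≤ j →
          ¬ List.Lex (· < ·) (sufFrom T q) (sufFrom T (ps ℓ))) :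
    ∀ s, IsMinSuffix (substr T i j) s →
      ∃ q, (q = p ∨ ∃ ℓ, 1 ≤ ℓ ∧ ℓ ≤ A ∧ q = ps ℓ) ∧ s = substr T q j := by
  intro s hs
  have hA_succ : j - i + 1 ≤ Len (A + 1) j :=
    not_lt.1 fun hlt => (hA3 (A + 1) (by omega) hlt).not_gt A.lt_succ_self
  exact stmt_4_general (monotoneOn_Len j) (Len_one j)
    (fun _ hℓ => Len_succ_le_two_mul hℓ j) hi hj ⟨hp1, hp2, hpmin⟩ hA1 hA2.le hA_succ hps hs
end

section
/- Let x be a nonempty string, w any string, and k ≥ 0 an integer. If lcp(x·w, w) ≥ k·|x|, then x^k is a prefix of w (equivalently, x^{k+1} is a prefix of x·w). -/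
/-!
If `x^k` is a prefix of `w`, then prepending `x` shows that `x^(k+1)` is a prefix of `x·w`.
A prefix of `x·w` that fits within `lcp(x·w, w)` is a prefix of `w`, so each period gained in `x·w`
carries over to `w`, as long as the bound on the `lcp` lasts.
-/

variable {α : Type*} [LinearOrder α]

/-- `lrep w a` is `w^a`, the concatenation of `a` copies of `w`. -/
def lrep (w : List α) (a : ℕ) : List α := (List.replicate a w).flatten

/-- `lcp u v` is the length of the longest common prefix of `u` and `v`. -/
def lcp : List α → List α → ℕ
  | a :: as, b :: bs => if a = b then lcp as bs + 1 else 0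
  | _, _ => 0

section lrep

variable {β : Type*}

theorem length_lrep (x : List β) (k : ℕ) : (lrep x k).length = k * x.length := by
  simp [lrep]

theorem lrep_succ (x : List β) (k : ℕ) : lrep x (k + 1) = x ++ lrep x k := by
  simp [lrep, List.replicate_succ]

theorem lrep_succ_prefix_append_iff {x w : List β} {k : ℕ} :
    lrep x (k + 1) <+: x ++ w ↔ lrep x k <+: w := by
  rw [lrep_succ, List.prefix_append_right_inj]

end lrep

theorem length_le_lcp_iff_prefix {p u v : List α} (hpu : p <+: u) :
    p.length ≤ lcp u v ↔ p <+: v := by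
  induction p generalizing u v with
  | nil => simp
  | cons a p ih =>
    obtain ⟨t, rfl⟩ := hpu
    cases v with
    | nil => simp [lcp]
    | cons b v =>
      by_cases hab : a = b
      · simp [lcp, hab, ih (List.prefix_append p t)]
      · simp [lcp, hab]

theorem lrep_prefix_of_mul_length_le_lcp {x w : List α} {k : ℕ}
    (h : k * x.length ≤ lcp (x ++ w) w) : lrep x k <+: w := by
  induction k with
  | zero => exact List.nil_prefix
  | succ k ih =>
    have hk : lrep x k <+: w := ih ((Nat.mul_le_mul_right _ k.le_succ).trans h)
    have hxw : lrep x (k + 1) <+: x ++ w := lrep_succ_prefix_append_iff.2 hk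
    rw [← length_lrep] at h
    exact (length_le_lcp_iff_prefix hxw).1 h

/-- Let `x` be a nonempty string, `w` any string, `k ≥ 0`.  If `lcp(x·w, w) ≥ k·|x|`, then
`x^k` is a prefix of `w` (equivalently, `x^(k+1)` is a prefix of `x·w`). -/
theorem stmt_16 (x w : List α) (k : ℕ)
    (hx : x ≠ [])
    (h : k * x.length ≤ lcp (x ++ w) w) :
    lrep x k <+: w ∧ lrep x (k + 1) <+: x ++ w := by
  have hk : lrep x k <+: w := lrep_prefix_of_mul_length_le_lcp h
  exact ⟨hk, lrep_succ_prefix_append_iff.2 hk⟩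
end
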